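/- Let D ⊆ ℝ² be open with coordinates (u,v), and let s₁, t₁, s₂, t₂, p : D → ℝ be smooth functions satisfying the Dirac equations ∂_u t₂ = −p s₁, ∂_v s₁ = p t₂, ∂_u s₂ = p t₁, ∂_v t₁ = −p s₂. Then the three 1-forms appearing in the Weierstraß representation formula are closed; explicitly: ∂_v(s₁² + t₁²) = −∂_u(s₂² + t₂²), ∂_v(s₁² − t₁²) = ∂_u(s₂² − t₂²), and ∂_v(s₁ t₁) = ∂_u(s₂ t₂) on D. -/

import Mathlib

noncomputable section

/-- The Minkowski bilinear form on `𝔼³₁ = ℝ³`: `⟨a,b⟩ = −a₁b₁ + a₂b₂ + a₃b₃`. -/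
def mink (a b : ℝ × ℝ × ℝ) : ℝ := -(a.1 * b.1) + a.2.1 * b.2.1 + a.2.2 * b.2.2

/-- Partial derivative in the first coordinate. -/
def pu {E : Type*} [NormedAddCommGroup E] [NormedSpace ℝ E] (f : ℝ × ℝ → E) (w : ℝ × ℝ) : E :=
  fderiv ℝ f w (1, 0)

/-- Partial derivative in the second coordinate. -/
def pv {E : Type*} [NormedAddCommGroup E] [NormedSpace ℝ E] (f : ℝ × ℝ → E) (w : ℝ × ℝ) : E :=
  fderiv ℝ f w (0, 1)

/-
The squares of the spinor components are exchanged in pairs: `∂_v(s₁²) = 2 p s₁ t₂ = -∂_u(t₂²)` and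
`∂_v(t₁²) = -2 p t₁ s₂ = -∂_u(s₂²)`. The first two identities are the sum and the difference of
these; in the third, both sides equal `p (t₁ t₂ - s₁ s₂)`.
-/

section DirectionalDerivatives

variable {𝕜 E A : Type*} [NontriviallyNormedField 𝕜] [NormedAddCommGroup E] [NormedSpace 𝕜 E]
  [NormedCommRing A] [NormedAlgebra 𝕜 A] {x u v : E}

theorem fderiv_sq_eq_neg_fderiv_sq {f g : E → A} {q : A}
    (hf : DifferentiableAt 𝕜 f x) (hg : DifferentiableAt 𝕜 g x)
    (hfv : fderiv 𝕜 f x v = q * g x) (hgu : fderiv 𝕜 g x u = -(q * f x)) :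
    fderiv 𝕜 (fun y => f y ^ 2) x v = -fderiv 𝕜 (fun y => g y ^ 2) x u := by
  have hf_sq : fderiv 𝕜 (fun y => f y ^ 2) x v = 2 * f x * (q * g x) := by
    simp [fderiv_fun_pow 2 hf, hfv]
  have hg_sq : fderiv 𝕜 (fun y => g y ^ 2) x u = 2 * g x * -(q * f x) := by
    simp [fderiv_fun_pow 2 hg, hgu]
  rw [hf_sq, hg_sq]
  ring

variable {s₁ t₁ s₂ t₂ : E → A} {p : A}

theorem fderiv_mul_eq_fderiv_mul_of_dirac
    (hs₁ : DifferentiableAt 𝕜 s₁ x) (ht₁ : DifferentiableAt 𝕜 t₁ x)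
    (hs₂ : DifferentiableAt 𝕜 s₂ x) (ht₂ : DifferentiableAt 𝕜 t₂ x)
    (ht₂u : fderiv 𝕜 t₂ x u = -(p * s₁ x)) (hs₁v : fderiv 𝕜 s₁ x v = p * t₂ x)
    (hs₂u : fderiv 𝕜 s₂ x u = p * t₁ x) (ht₁v : fderiv 𝕜 t₁ x v = -(p * s₂ x)) :
    fderiv 𝕜 (fun y => s₁ y * t₁ y) x v = fderiv 𝕜 (fun y => s₂ y * t₂ y) x u := by
  calc fderiv 𝕜 (fun y => s₁ y * t₁ y) x v
      = s₁ x * -(p * s₂ x) + t₁ x * (p * t₂ x) := by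
        simp [fderiv_fun_mul hs₁ ht₁, hs₁v, ht₁v]
    _ = s₂ x * -(p * s₁ x) + t₂ x * (p * t₁ x) := by ring
    _ = fderiv 𝕜 (fun y => s₂ y * t₂ y) x u := by
        simp [fderiv_fun_mul hs₂ ht₂, hs₂u, ht₂u]

theorem weierstrass_one_forms_closed_general
    (hs₁ : DifferentiableAt 𝕜 s₁ x) (ht₁ : DifferentiableAt 𝕜 t₁ x)
    (hs₂ : DifferentiableAt 𝕜 s₂ x) (ht₂ : DifferentiableAt 𝕜 t₂ x)
    (ht₂u : fderiv 𝕜 t₂ x u = -(p * s₁ x)) (hs₁v : fderiv 𝕜 s₁ x v = p * t₂ x)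
    (hs₂u : fderiv 𝕜 s₂ x u = p * t₁ x) (ht₁v : fderiv 𝕜 t₁ x v = -(p * s₂ x)) :
    fderiv 𝕜 (fun y => s₁ y ^ 2 + t₁ y ^ 2) x v =
        -fderiv 𝕜 (fun y => s₂ y ^ 2 + t₂ y ^ 2) x u ∧
      fderiv 𝕜 (fun y => s₁ y ^ 2 - t₁ y ^ 2) x v =
        fderiv 𝕜 (fun y => s₂ y ^ 2 - t₂ y ^ 2) x u ∧
      fderiv 𝕜 (fun y => s₁ y * t₁ y) x v = fderiv 𝕜 (fun y => s₂ y * t₂ y) x u := by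
  have s₁_sq_v : fderiv 𝕜 (fun y => s₁ y ^ 2) x v = -fderiv 𝕜 (fun y => t₂ y ^ 2) x u :=
    fderiv_sq_eq_neg_fderiv_sq hs₁ ht₂ hs₁v ht₂u
  have t₁_sq_v : fderiv 𝕜 (fun y => t₁ y ^ 2) x v = -fderiv 𝕜 (fun y => s₂ y ^ 2) x u :=
    fderiv_sq_eq_neg_fderiv_sq (q := -p) ht₁ hs₂ (by simpa using ht₁v) (by simpa using hs₂u)
  refine ⟨?_, ?_, fderiv_mul_eq_fderiv_mul_of_dirac hs₁ ht₁ hs₂ ht₂ ht₂u hs₁v hs₂u ht₁v⟩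
  · rw [fderiv_fun_add (hs₁.fun_pow 2) (ht₁.fun_pow 2),
      fderiv_fun_add (hs₂.fun_pow 2) (ht₂.fun_pow 2), add_apply, add_apply, s₁_sq_v, t₁_sq_v]
    abel
  · rw [fderiv_fun_sub (hs₁.fun_pow 2) (ht₁.fun_pow 2),
      fderiv_fun_sub (hs₂.fun_pow 2) (ht₂.fun_pow 2), sub_apply, sub_apply, s₁_sq_v, t₁_sq_v]
    abel

end DirectionalDerivatives

/-- If `s₁, t₁, s₂, t₂` satisfy the Dirac equations with potential `p`, then the
1-forms of the Weierstraß representation formula are closed: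
`∂_v(s₁²+t₁²) = −∂_u(s₂²+t₂²)`, `∂_v(s₁²−t₁²) = ∂_u(s₂²−t₂²)`, `∂_v(s₁t₁) = ∂_u(s₂t₂)`. -/
theorem weierstrass_one_forms_closed
    (D : Set (ℝ × ℝ)) (hD : IsOpen D)
    (s₁ t₁ s₂ t₂ p : ℝ × ℝ → ℝ)
    (hs₁ : ContDiffOn ℝ (⊤ : ℕ∞) s₁ D) (ht₁ : ContDiffOn ℝ (⊤ : ℕ∞) t₁ D)
    (hs₂ : ContDiffOn ℝ (⊤ : ℕ∞) s₂ D) (ht₂ : ContDiffOn ℝ (⊤ : ℕ∞) t₂ D)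
    (hp : ContDiffOn ℝ (⊤ : ℕ∞) p D)
    (hd1 : ∀ w ∈ D, pu t₂ w = -(p w * s₁ w))
    (hd2 : ∀ w ∈ D, pv s₁ w = p w * t₂ w)
    (hd3 : ∀ w ∈ D, pu s₂ w = p w * t₁ w)
    (hd4 : ∀ w ∈ D, pv t₁ w = -(p w * s₂ w)) :
    ∀ w ∈ D,
      pv (fun z => s₁ z ^ 2 + t₁ z ^ 2) w = -pu (fun z => s₂ z ^ 2 + t₂ z ^ 2) w ∧
      pv (fun z => s₁ z ^ 2 - t₁ z ^ 2) w = pu (fun z => s₂ z ^ 2 - t₂ z ^ 2) w ∧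
      pv (fun z => s₁ z * t₁ z) w = pu (fun z => s₂ z * t₂ z) w := by
  intro w hw
  have differentiableAt {f : ℝ × ℝ → ℝ} (hf : ContDiffOn ℝ (⊤ : ℕ∞) f D) :
      DifferentiableAt ℝ f w :=
    (hf.differentiableOn (by simp)).differentiableAt (hD.mem_nhds hw)
  exact weierstrass_one_forms_closed_general (differentiableAt hs₁) (differentiableAt ht₁)
    (differentiableAt hs₂) (differentiableAt ht₂) (hd1 w hw) (hd2 w hw) (hd3 w hw) (hd4 w hw)
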